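/- The number of equivalence classes of triangulations of P_{n+2}, where two triangulations T and T' are equivalent iff there exists a bijection f : {1,…,n} → {1,…,n} with f(k_0) = k_0' and f(φ(k)) = φ'(f(k)) for all k ≠ k_0 (i.e. iff their binary trees are isomorphic as unordered rooted trees), equals the Wedderburn–Etherington number b_{n+1}. -/

import Mathlib

/-- A triangulation of the convex `(n+2)`-gon with vertices `0, 1, …, n+1` labelled
counterclockwise, encoded as the finite set of its `2n+1` edges `(a,b)` with `a < b`. -/
def IsTriangulation (n : ℕ) (T : Finset (ℕ × ℕ)) : Prop :=
  (∀ e ∈ T, e.1 < e.2 ∧ e.2 ≤ n + 1) ∧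
  (∀ i, i ≤ n → (i, i + 1) ∈ T) ∧
  (0, n + 1) ∈ T ∧
  T.card = 2 * n + 1 ∧
  ∀ e ∈ T, ∀ f ∈ T, ¬(e.1 < f.1 ∧ f.1 < e.2 ∧ e.2 < f.2)

/-- `kL k < k < kR k` is the (unique) triangle of `T` with middle vertex `k`,
for each `k ∈ {1,…,n}`. -/
def MidTriangle (n : ℕ) (T : Finset (ℕ × ℕ)) (kL kR : ℕ → ℕ) : Prop :=
  ∀ k, 1 ≤ k → k ≤ n → kL k < k ∧ k < kR k ∧
    (kL k, k) ∈ T ∧ (k, kR k) ∈ T ∧ (kL k, kR k) ∈ T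

/-- `k0` is the middle vertex of the triangle of `T` containing the distinguished edge
`{0, n+1}`. -/
def IsRootVertex (n : ℕ) (kL kR : ℕ → ℕ) (k0 : ℕ) : Prop :=
  1 ≤ k0 ∧ k0 ≤ n ∧ kL k0 = 0 ∧ kR k0 = n + 1

/-- Defining property of `φ`: for `k ≠ k0`, `φ k = k_L` if `{k_L,k_R}` is an edge of the
right tree `T^R` (i.e. `{k_L,k_R} = {m, m_R}` for some `m ∈ {1,…,n}`), and `φ k = k_R` if
`{k_L,k_R}` is an edge of the left tree `T^L` (i.e. `{k_L,k_R} = {m_L, m}` for some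
`m ∈ {1,…,n}`). -/
def PhiMap (n : ℕ) (kL kR : ℕ → ℕ) (k0 : ℕ) (φ : ℕ → ℕ) : Prop :=
  ∀ k, 1 ≤ k → k ≤ n → k ≠ k0 →
    ((∃ m, 1 ≤ m ∧ m ≤ n ∧ kL k = m ∧ kR k = kR m) ∧ φ k = kL k) ∨
    ((∃ m, 1 ≤ m ∧ m ≤ n ∧ kR k = m ∧ kL k = kL m) ∧ φ k = kR k)


/-- The full combinatorial data of a triangulation `T` of the `(n+2)`-gon: the middle-vertex
functions `kL, kR`, the root `k0` (middle vertex of the triangle on the edge `{0,n+1}`),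
and the parent map `φ` of the associated binary tree `B_T`. -/
def TriData (n : ℕ) (T : Finset (ℕ × ℕ)) (kL kR : ℕ → ℕ) (k0 : ℕ) (φ : ℕ → ℕ) : Prop :=
  MidTriangle n T kL kR ∧ IsRootVertex n kL kR k0 ∧ PhiMap n kL kR k0 φ

/-- Two triangulations are equivalent iff their binary trees are isomorphic as unordered
rooted trees, i.e. there is a bijection `f` of `{1,…,n}` with `f(k₀) = k₀'` and
`f(φ(k)) = φ'(f(k))` for all `k ≠ k₀`. -/
def TriEquiv (n : ℕ) (T T' : Finset (ℕ × ℕ)) : Prop :=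
  ∃ (kL kR kL' kR' : ℕ → ℕ) (k0 k0' : ℕ) (φ φ' : ℕ → ℕ) (f : ℕ → ℕ),
    TriData n T kL kR k0 φ ∧ TriData n T' kL' kR' k0' φ' ∧
    Set.BijOn f (Set.Icc 1 n) (Set.Icc 1 n) ∧ f k0 = k0' ∧
    ∀ k, 1 ≤ k → k ≤ n → k ≠ k0 → f (φ k) = φ' (f k)


namespace WE

/-- Ordered binary trees. -/
inductive BT : Type
  | nil : BT
  | node (l r : BT) : BT

namespace BT

/-- Number of internal nodes. -/
def sz : BT → ℕ
  | nil => 0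
  | node l r => l.sz + r.sz + 1

/-- Symmetric injective coding of unordered pairs. -/
def g (x y : ℕ) : ℕ := Nat.pair (x + y - max x y) (max x y) + 1

/-- Code of the unordered tree. -/
def canon : BT → ℕ
  | nil => 0
  | node l r => g l.canon r.canon

/-- Root vertex. -/
def root (a : ℕ) : BT → ℕ
  | nil => a
  | node l _ => a + l.sz + 1

/-- Parent map. -/
def par (a : ℕ) : BT → ℕ → ℕ
  | nil, _ => 0
  | node l r, k =>
    if k < a + l.sz + 1 then (if k = root a l then a + l.sz + 1 else par a l k)
    else (if k = root (a + l.sz + 1) r then a + l.sz + 1 else par (a + l.sz + 1) r k)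

/-- Codes of the subtrees. -/
def cd (a : ℕ) : BT → ℕ → ℕ
  | nil, _ => 0
  | node l r, k =>
    if k < a + l.sz + 1 then cd a l k
    else if k = a + l.sz + 1 then g l.canon r.canon
    else cd (a + l.sz + 1) r k

/-- Left vertex of the triangle. -/
def lf (a : ℕ) : BT → ℕ → ℕ
  | nil, _ => 0
  | node l r, k =>
    if k < a + l.sz + 1 then lf a l k
    else if k = a + l.sz + 1 then a
    else lf (a + l.sz + 1) r k

/-- Right vertex of the triangle. -/
def rt (a : ℕ) : BT → ℕ → ℕ
  | nil, _ => 0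
  | node l r, k =>
    if k < a + l.sz + 1 then rt a l k
    else if k = a + l.sz + 1 then a + l.sz + 1 + r.sz + 1
    else rt (a + l.sz + 1) r k

/-- The triangulation. -/
def tri (a : ℕ) : BT → Finset (ℕ × ℕ)
  | nil => {(a, a + 1)}
  | node l r => insert (a, a + l.sz + 1 + r.sz + 1) (tri a l ∪ tri (a + l.sz + 1) r)

theorem g_comm (x y : ℕ) : g x y = g y x := by
  simp [g, add_comm, max_comm]

theorem g_pos (x y : ℕ) : 0 < g x y := by simp [g]

theorem g_inj {x y x' y' : ℕ} (h : g x y = g x' y') :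
    (x = x' ∧ y = y') ∨ (x = y' ∧ y = x') := by
  simp only [g, Nat.add_right_cancel_iff, Nat.pair_eq_pair] at h
  omega

theorem root_node (a : ℕ) (l r : BT) : (node l r).root a = a + l.sz + 1 := rfl

theorem par_node (a : ℕ) (l r : BT) (k : ℕ) : (node l r).par a k =
    if k < a + l.sz + 1 then (if k = root a l then a + l.sz + 1 else par a l k)
    else (if k = root (a + l.sz + 1) r then a + l.sz + 1 else par (a + l.sz + 1) r k) := rfl

theorem root_mem (a : ℕ) (t : BT) (h : 0 < t.sz) : a < t.root a ∧ t.root a ≤ a + t.sz := by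
  cases t with
  | nil => simp [sz] at h
  | node l r => simp only [root_node, sz]; omega

theorem par_mem (t : BT) : ∀ (a k : ℕ), a < k → k ≤ a + t.sz → k ≠ t.root a →
    a < t.par a k ∧ t.par a k ≤ a + t.sz := by
  induction t with
  | nil => intro a k; simp [sz]; omega
  | node l r hl hr =>
    intro a k h1 h2 h3
    simp only [sz, root_node, par_node] at *
    have := hl a k
    have := hr (a + l.sz + 1) k
    split_ifs <;> omega

/-- Children. -/
def ch (a : ℕ) (t : BT) (v : ℕ) : Finset ℕ :=
  (Finset.Ioc a (a + t.sz)).filter fun k => k ≠ t.root a ∧ t.par a k = v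

theorem mem_ch {a : ℕ} {t : BT} {v k : ℕ} :
    k ∈ t.ch a v ↔ a < k ∧ k ≤ a + t.sz ∧ k ≠ t.root a ∧ t.par a k = v := by
  simp [ch, and_assoc]

theorem cd_root (t : BT) (a : ℕ) : t.cd a (t.root a) = t.canon := by
  cases t <;> simp [cd, root, canon]

theorem ch_left (a : ℕ) (l r : BT) (v : ℕ) (h1 : a < v) (h2 : v ≤ a + l.sz) :
    (node l r).ch a v = l.ch a v := by
  ext k
  rw [mem_ch, mem_ch]
  have := par_mem r (a + l.sz + 1) k
  simp only [sz, root_node, par_node]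
  split_ifs <;> omega

theorem ch_right (a : ℕ) (l r : BT) (v : ℕ) (h1 : a + l.sz + 1 < v) :
    (node l r).ch a v = r.ch (a + l.sz + 1) v := by
  ext k
  rw [mem_ch, mem_ch]
  have := par_mem l a k
  simp only [sz, root_node, par_node]
  split_ifs <;> omega

theorem ch_root (a : ℕ) (l r : BT) :
    (node l r).ch a (a + l.sz + 1) =
      (if 0 < l.sz then {l.root a} else ∅) ∪
      (if 0 < r.sz then {r.root (a + l.sz + 1)} else ∅) := by
  ext k
  rw [mem_ch]
  have := par_mem l a k
  have := par_mem r (a + l.sz + 1) k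
  have := root_mem a l
  have := root_mem (a + l.sz + 1) r
  have e : ∀ (c x : ℕ), k ∈ (if 0 < c then ({x} : Finset ℕ) else ∅) ↔ 0 < c ∧ k = x := by
    intro c x
    split_ifs with h <;> simp [h]
  simp only [sz, root_node, par_node, Finset.mem_union, e]
  split_ifs <;> omega

theorem canon_nil_of {t : BT} (h : ¬ 0 < t.sz) : t.canon = 0 := by
  cases t <;> simp [canon, sz] at *

theorem cd_node_left (a : ℕ) (l r : BT) (k : ℕ) (h : k ≤ a + l.sz) :
    (node l r).cd a k = l.cd a k := by
  simp only [cd]; rw [if_pos (by omega)]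

theorem cd_node_right (a : ℕ) (l r : BT) (k : ℕ) (h : a + l.sz + 1 < k) :
    (node l r).cd a k = r.cd (a + l.sz + 1) k := by
  simp only [cd]; rw [if_neg (by omega), if_neg (by omega)]

theorem cd_eq (t : BT) : ∀ (a v : ℕ), a < v → v ≤ a + t.sz →
    t.cd a v = Nat.pair ((∑ k ∈ t.ch a v, t.cd a k) - (t.ch a v).sup (t.cd a))
      ((t.ch a v).sup (t.cd a)) + 1 := by
  induction t with
  | nil => intro a v; simp [sz]; omega
  | node l r hl hr =>
    intro a v h1 h2
    rcases lt_trichotomy v (a + l.sz + 1) with h | h | h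
    · have e1 : ∀ k ∈ l.ch a v, (node l r).cd a k = l.cd a k := by
        intro k hk
        rw [mem_ch] at hk
        exact cd_node_left _ _ _ _ hk.2.1
      rw [ch_left _ _ _ _ h1 (by omega), cd_node_left _ _ _ _ (by omega),
        Finset.sum_congr rfl e1, Finset.sup_congr rfl e1]
      exact hl a v h1 (by omega)
    · subst h
      have e1 : (node l r).cd a (a + l.sz + 1) = g l.canon r.canon := by simp [cd]
      have q1 := root_mem a l
      have q2 := root_mem (a + l.sz + 1) r
      rw [ch_root, e1]
      have e2 : 0 < l.sz → (node l r).cd a (l.root a) = l.canon := by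
        intro hl0
        rw [cd_node_left _ _ _ _ (by omega), cd_root]
      have e3 : 0 < r.sz → (node l r).cd a (r.root (a + l.sz + 1)) = r.canon := by
        intro hl0
        rw [cd_node_right _ _ _ _ (by omega), cd_root]
      split_ifs with c1 c2 c2
      · rw [Finset.sum_union (by simp; omega), Finset.sup_union]
        simp [e2 c1, e3 c2, g]
      · simp [e2 c1, canon_nil_of c2, g]
      · simp [e3 c2, canon_nil_of c1, g]
      · simp [canon_nil_of c1, canon_nil_of c2, g]
    · have e1 : ∀ k ∈ r.ch (a + l.sz + 1) v,
          (node l r).cd a k = r.cd (a + l.sz + 1) k := by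
        intro k hk
        rw [mem_ch] at hk
        exact cd_node_right _ _ _ _ hk.1
      rw [ch_right _ _ _ _ h, cd_node_right _ _ _ _ h,
        Finset.sum_congr rfl e1, Finset.sup_congr rfl e1]
      exact hr _ v h (by simp only [sz] at h2; omega)

/-- Isomorphism of rooted trees. -/
def Iso (a : ℕ) (t : BT) (a' : ℕ) (t' : BT) (f : ℕ → ℕ) : Prop :=
  Set.BijOn f (Set.Ioc a (a + t.sz)) (Set.Ioc a' (a' + t'.sz)) ∧
  (0 < t.sz → f (t.root a) = t'.root a') ∧
  ∀ k, a < k → k ≤ a + t.sz → k ≠ t.root a → f (t.par a k) = t'.par a' (f k)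

theorem Iso.sz_eq {a t a' t' f} (h : Iso a t a' t' f) : t.sz = t'.sz := by
  have := Set.BijOn.finsetCard_eq (s := Finset.Ioc a (a + t.sz))
    (t := Finset.Ioc a' (a' + t'.sz)) f (by simpa using h.1)
  simpa using this

theorem Iso.canon_eq {a t a' t' f} (h : Iso a t a' t' f) : t.canon = t'.canon := by
  have hs := h.sz_eq
  obtain ⟨hb, hr, hp⟩ := h
  by_cases h0 : 0 < t.sz
  swap
  · rw [canon_nil_of h0, canon_nil_of (hs ▸ h0)]
  have key : ∀ N v, t.cd a v = N → a < v → v ≤ a + t.sz → t'.cd a' (f v) = t.cd a v := by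
    intro N
    induction N using Nat.strong_induction_on with
    | _ N ih =>
      intro v hN h1 h2
      have hfv := hb.mapsTo (show v ∈ Set.Ioc a (a + t.sz) from ⟨h1, h2⟩)
      have hch : t'.ch a' (f v) = (t.ch a v).image f := by
        ext k'
        rw [mem_ch, Finset.mem_image]
        constructor
        · rintro ⟨c1, c2, c3, c4⟩
          obtain ⟨k, hk, rfl⟩ := hb.surjOn ⟨c1, c2⟩
          refine ⟨k, mem_ch.2 ⟨hk.1, hk.2, ?_, ?_⟩, rfl⟩
          · rintro rfl; exact c3 (hr h0)
          · have hkr : k ≠ t.root a := by rintro rfl; exact c3 (hr h0)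
            have := par_mem t a k hk.1 hk.2 hkr
            apply hb.injOn this ⟨h1, h2⟩
            rw [hp k hk.1 hk.2 hkr, c4]
        · rintro ⟨k, hk, rfl⟩
          rw [mem_ch] at hk
          obtain ⟨c1, c2, c3, c4⟩ := hk
          have := hb.mapsTo (show k ∈ Set.Ioc a (a + t.sz) from ⟨c1, c2⟩)
          refine ⟨this.1, this.2, ?_, ?_⟩
          · intro e
            rw [← hr h0] at e
            exact c3 (hb.injOn ⟨c1, c2⟩ (root_mem a t h0) e)
          · rw [← hp k c1 c2 c3, c4]
      have hlt : ∀ k ∈ t.ch a v, t'.cd a' (f k) = t.cd a k := by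
        intro k hk
        have hk' := mem_ch.1 hk
        refine ih _ ?_ k rfl hk'.1 hk'.2.1
        rw [← hN, cd_eq t a v h1 h2]
        have := Finset.le_sup (f := t.cd a) hk
        have := Nat.right_le_pair ((∑ k ∈ t.ch a v, t.cd a k) - (t.ch a v).sup (t.cd a))
          ((t.ch a v).sup (t.cd a))
        omega
      rw [cd_eq t a v h1 h2, cd_eq t' a' (f v) hfv.1 hfv.2, hch,
        Finset.sum_image, Finset.sup_image]
      · rw [Finset.sum_congr rfl hlt]
        have : (t.ch a v).sup (t'.cd a' ∘ f) = (t.ch a v).sup (t.cd a) :=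
          Finset.sup_congr rfl hlt
        rw [this]
      · intro x hx y hy e
        rw [Finset.mem_coe, mem_ch] at hx hy
        exact hb.injOn ⟨hx.1, hx.2.1⟩ ⟨hy.1, hy.2.1⟩ e
  have hm := root_mem a t h0
  have := key _ (t.root a) rfl hm.1 hm.2
  rw [hr h0, cd_root, cd_root] at this
  exact this.symm

theorem sz_eq_of_canon (t : BT) : ∀ t' : BT, t.canon = t'.canon → t.sz = t'.sz := by
  induction t with
  | nil =>
    intro t' h
    cases t' with
    | nil => rfl
    | node l r => have := g_pos l.canon r.canon; simp [canon] at h; omega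
  | node l r hl hr =>
    intro t' h
    cases t' with
    | nil => have := g_pos l.canon r.canon; simp [canon] at h; omega
    | node l' r' =>
      simp only [canon] at h
      simp only [sz]
      rcases g_inj h with ⟨h1, h2⟩ | ⟨h1, h2⟩
      · rw [hl _ h1, hr _ h2]
      · rw [hl _ h1, hr _ h2]; omega

theorem par_node_left {a : ℕ} {l r : BT} {k : ℕ} (h : k ≤ a + l.sz) (h' : k ≠ l.root a) :
    (node l r).par a k = l.par a k := by
  rw [par_node, if_pos (by omega), if_neg h']

theorem par_node_right {a : ℕ} {l r : BT} {k : ℕ} (h : a + l.sz + 1 < k)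
    (h' : k ≠ r.root (a + l.sz + 1)) :
    (node l r).par a k = r.par (a + l.sz + 1) k := by
  rw [par_node, if_neg (by omega), if_neg h']

theorem par_node_left_root {a : ℕ} {l r : BT} (h : 0 < l.sz) :
    (node l r).par a (l.root a) = a + l.sz + 1 := by
  have := root_mem a l h
  rw [par_node, if_pos (by omega), if_pos rfl]

theorem par_node_right_root {a : ℕ} {l r : BT} (h : 0 < r.sz) :
    (node l r).par a (r.root (a + l.sz + 1)) = a + l.sz + 1 := by
  have := root_mem (a + l.sz + 1) r h
  rw [par_node, if_neg (by omega), if_pos rfl]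

theorem bij_glue {f f1 f2 : ℕ → ℕ} {A B A' B' : Set ℕ} {p q : ℕ}
    (h1 : Set.BijOn f1 A A') (h2 : Set.BijOn f2 B B')
    (e1 : ∀ k ∈ A, f k = f1 k) (e2 : ∀ k ∈ B, f k = f2 k) (e3 : f p = q)
    (d1 : ∀ k ∈ A', k ∉ B') (d2 : q ∉ A') (d3 : q ∉ B') :
    Set.BijOn f (A ∪ {p} ∪ B) (A' ∪ {q} ∪ B') := by
  refine ⟨?_, ?_, ?_⟩
  · rintro k ((hk | hk) | hk)
    · left; left; rw [e1 k hk]; exact h1.mapsTo hk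
    · left; right; rw [Set.mem_singleton_iff] at hk ⊢; rw [hk, e3]
    · right; rw [e2 k hk]; exact h2.mapsTo hk
  · have m1 := fun k (hk : k ∈ A) => h1.mapsTo hk
    have m2 := fun k (hk : k ∈ B) => h2.mapsTo hk
    have i1 := h1.injOn
    have i2 := h2.injOn
    rintro k ((hk | hk) | hk) j ((hj | hj) | hj) hkj
    · rw [e1 k hk, e1 j hj] at hkj; exact i1 hk hj hkj
    · rw [Set.mem_singleton_iff] at hj; subst hj
      rw [e1 k hk, e3] at hkj; exact absurd (hkj ▸ m1 k hk) d2
    · rw [e1 k hk, e2 j hj] at hkj; exact absurd (m2 j hj) (hkj ▸ d1 _ (m1 k hk))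
    · rw [Set.mem_singleton_iff] at hk; subst hk
      rw [e1 j hj, e3] at hkj; exact absurd (m1 j hj) (hkj ▸ d2)
    · rw [Set.mem_singleton_iff] at hk hj; rw [hk, hj]
    · rw [Set.mem_singleton_iff] at hk; subst hk
      rw [e2 j hj, e3] at hkj; exact absurd (m2 j hj) (hkj ▸ d3)
    · rw [e2 k hk, e1 j hj] at hkj; exact absurd (m2 k hk) (hkj ▸ d1 _ (m1 j hj))
    · rw [Set.mem_singleton_iff] at hj; subst hj
      rw [e2 k hk, e3] at hkj; exact absurd (hkj ▸ m2 k hk) d3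
    · rw [e2 k hk, e2 j hj] at hkj; exact i2 hk hj hkj
  · rintro k ((hk | hk) | hk)
    · obtain ⟨j, hj, rfl⟩ := h1.surjOn hk
      exact ⟨j, Or.inl (Or.inl hj), e1 j hj⟩
    · rw [Set.mem_singleton_iff] at hk; subst hk
      exact ⟨p, Or.inl (Or.inr rfl), e3⟩
    · obtain ⟨j, hj, rfl⟩ := h2.surjOn hk
      exact ⟨j, Or.inr hj, e2 j hj⟩

theorem Ioc_node (a : ℕ) (l r : BT) : Set.Ioc a (a + (node l r).sz) =
    Set.Ioc a (a + l.sz) ∪ {a + l.sz + 1} ∪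
      Set.Ioc (a + l.sz + 1) (a + l.sz + 1 + r.sz) := by
  ext k
  simp only [sz, Set.mem_Ioc, Set.mem_union, Set.mem_singleton_iff]
  omega

theorem Ioc_node' (a : ℕ) (l r : BT) : Set.Ioc a (a + (node l r).sz) =
    Set.Ioc (a + l.sz + 1) (a + l.sz + 1 + r.sz) ∪ {a + l.sz + 1} ∪
      Set.Ioc a (a + l.sz) := by
  ext k
  simp only [sz, Set.mem_Ioc, Set.mem_union, Set.mem_singleton_iff]
  omega

theorem iso_glue {a l r a' l' r' f1 f2} (h1 : Iso a l a' l' f1)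
    (h2 : Iso (a + l.sz + 1) r (a' + l'.sz + 1) r' f2) :
    ∃ f, Iso a (node l r) a' (node l' r') f := by
  have hs1 := h1.sz_eq
  have hs2 := h2.sz_eq
  obtain ⟨b1, r1, p1⟩ := h1
  obtain ⟨b2, r2, p2⟩ := h2
  set f : ℕ → ℕ := fun k => if k < a + l.sz + 1 then f1 k else
    if k = a + l.sz + 1 then a' + l'.sz + 1 else f2 k with hf
  have e1 : ∀ k ∈ Set.Ioc a (a + l.sz), f k = f1 k := by
    intro k hk
    simp only [hf]; rw [if_pos (by have := hk.2; omega)]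
  have e2 : ∀ k ∈ Set.Ioc (a + l.sz + 1) (a + l.sz + 1 + r.sz), f k = f2 k := by
    intro k hk
    have := hk.1
    simp only [hf]; rw [if_neg (by omega), if_neg (by omega)]
  have e3 : f (a + l.sz + 1) = a' + l'.sz + 1 := by simp [hf]
  refine ⟨f, ?_, fun _ => e3, ?_⟩
  · rw [Ioc_node, Ioc_node]
    refine bij_glue b1 b2 e1 e2 e3 ?_ ?_ ?_
    · intro k; simp only [Set.mem_Ioc]; omega
    · simp only [Set.mem_Ioc]; omega
    · simp only [Set.mem_Ioc]; omega
  · intro k c1 c2 c3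
    rw [root_node] at c3
    simp only [sz] at c2
    rcases Nat.lt_or_gt_of_ne c3 with c | c
    · have hk : k ∈ Set.Ioc a (a + l.sz) := ⟨c1, by omega⟩
      have hl0 : 0 < l.sz := by omega
      have hfk := b1.mapsTo hk
      have hrm := root_mem a l hl0
      rw [e1 k hk]
      by_cases hkr : k = l.root a
      · rw [hkr, par_node_left_root hl0, e3, r1 hl0, par_node_left_root (by omega)]
      · have hne : f1 k ≠ l'.root a' := by
          rw [← r1 hl0]
          intro e
          exact hkr (b1.injOn hk hrm e)
        rw [par_node_left hk.2 hkr, par_node_left hfk.2 hne, ← p1 k hk.1 hk.2 hkr,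
          e1 _ (par_mem l a k hk.1 hk.2 hkr)]
    · have hk : k ∈ Set.Ioc (a + l.sz + 1) (a + l.sz + 1 + r.sz) := ⟨c, by omega⟩
      have hl0 : 0 < r.sz := by omega
      have hfk := b2.mapsTo hk
      have hrm := root_mem (a + l.sz + 1) r hl0
      rw [e2 k hk]
      by_cases hkr : k = r.root (a + l.sz + 1)
      · rw [hkr, par_node_right_root hl0, e3, r2 hl0, par_node_right_root (by omega)]
      · have hne : f2 k ≠ r'.root (a' + l'.sz + 1) := by
          rw [← r2 hl0]
          intro e
          exact hkr (b2.injOn hk hrm e)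
        rw [par_node_right hk.1 hkr, par_node_right hfk.1 hne, ← p2 k hk.1 hk.2 hkr,
          e2 _ (par_mem r _ k hk.1 hk.2 hkr)]

theorem iso_swap {a l r a' l' r' f1 f2} (h1 : Iso a l (a' + l'.sz + 1) r' f1)
    (h2 : Iso (a + l.sz + 1) r a' l' f2) :
    ∃ f, Iso a (node l r) a' (node l' r') f := by
  have hs1 := h1.sz_eq
  have hs2 := h2.sz_eq
  obtain ⟨b1, r1, p1⟩ := h1
  obtain ⟨b2, r2, p2⟩ := h2
  set f : ℕ → ℕ := fun k => if k < a + l.sz + 1 then f1 k else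
    if k = a + l.sz + 1 then a' + l'.sz + 1 else f2 k with hf
  have e1 : ∀ k ∈ Set.Ioc a (a + l.sz), f k = f1 k := by
    intro k hk
    simp only [hf]; rw [if_pos (by have := hk.2; omega)]
  have e2 : ∀ k ∈ Set.Ioc (a + l.sz + 1) (a + l.sz + 1 + r.sz), f k = f2 k := by
    intro k hk
    have := hk.1
    simp only [hf]; rw [if_neg (by omega), if_neg (by omega)]
  have e3 : f (a + l.sz + 1) = a' + l'.sz + 1 := by simp [hf]
  refine ⟨f, ?_, fun _ => e3, ?_⟩
  · rw [Ioc_node, Ioc_node']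
    refine bij_glue b1 b2 e1 e2 e3 ?_ ?_ ?_
    · intro k; simp only [Set.mem_Ioc]; omega
    · simp only [Set.mem_Ioc]; omega
    · simp only [Set.mem_Ioc]; omega
  · intro k c1 c2 c3
    rw [root_node] at c3
    simp only [sz] at c2
    rcases Nat.lt_or_gt_of_ne c3 with c | c
    · have hk : k ∈ Set.Ioc a (a + l.sz) := ⟨c1, by omega⟩
      have hl0 : 0 < l.sz := by omega
      have hfk := b1.mapsTo hk
      have hrm := root_mem a l hl0
      rw [e1 k hk]
      by_cases hkr : k = l.root a
      · rw [hkr, par_node_left_root hl0, e3, r1 hl0, par_node_right_root (by omega)]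
      · have hne : f1 k ≠ r'.root (a' + l'.sz + 1) := by
          rw [← r1 hl0]
          intro e
          exact hkr (b1.injOn hk hrm e)
        rw [par_node_left hk.2 hkr, par_node_right hfk.1 hne, ← p1 k hk.1 hk.2 hkr,
          e1 _ (par_mem l a k hk.1 hk.2 hkr)]
    · have hk : k ∈ Set.Ioc (a + l.sz + 1) (a + l.sz + 1 + r.sz) := ⟨c, by omega⟩
      have hl0 : 0 < r.sz := by omega
      have hfk := b2.mapsTo hk
      have hrm := root_mem (a + l.sz + 1) r hl0
      rw [e2 k hk]
      by_cases hkr : k = r.root (a + l.sz + 1)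
      · rw [hkr, par_node_right_root hl0, e3, r2 hl0, par_node_left_root (by omega)]
      · have hne : f2 k ≠ l'.root a' := by
          rw [← r2 hl0]
          intro e
          exact hkr (b2.injOn hk hrm e)
        rw [par_node_right hk.1 hkr, par_node_left hfk.2 hne, ← p2 k hk.1 hk.2 hkr,
          e2 _ (par_mem r _ k hk.1 hk.2 hkr)]

theorem exists_iso (t : BT) : ∀ (t' : BT) (a a' : ℕ), t.canon = t'.canon →
    ∃ f, Iso a t a' t' f := by
  induction t with
  | nil =>
    intro t' a a' h
    have h' := sz_eq_of_canon _ _ h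
    cases t' with
    | nil =>
      refine ⟨id, ?_, ?_, ?_⟩
      · simp [sz]
      · simp [sz]
      · simp [sz]; omega
    | node l r => simp [sz] at h'
  | node l r hl hr =>
    intro t' a a' h
    cases t' with
    | nil => have := g_pos l.canon r.canon; simp [canon] at h; omega
    | node l' r' =>
      simp only [canon] at h
      rcases g_inj h with ⟨h1, h2⟩ | ⟨h1, h2⟩
      · obtain ⟨f1, p1⟩ := hl l' a a' h1
        obtain ⟨f2, p2⟩ := hr r' (a + l.sz + 1) (a' + l'.sz + 1) h2
        exact iso_glue p1 p2
      · obtain ⟨f1, p1⟩ := hl r' a (a' + l'.sz + 1) h1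
        obtain ⟨f2, p2⟩ := hr l' (a + l.sz + 1) a' h2
        exact iso_swap p1 p2

theorem tri_mem (t : BT) : ∀ (a : ℕ) (e : ℕ × ℕ), e ∈ t.tri a →
    a ≤ e.1 ∧ e.1 < e.2 ∧ e.2 ≤ a + t.sz + 1 := by
  induction t with
  | nil => intro a e he; simp only [tri, Finset.mem_singleton] at he; subst he; simp [sz]
  | node l r hl hr =>
    intro a e he
    simp only [tri, Finset.mem_insert, Finset.mem_union] at he
    simp only [sz]
    rcases he with rfl | he | he
    · simp only; omega
    · have := hl _ _ he; omega
    · have := hr _ _ he; omega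

theorem tri_top (t : BT) (a : ℕ) : (a, a + t.sz + 1) ∈ t.tri a := by
  cases t with
  | nil => simp [tri, sz]
  | node l r =>
    simp only [tri, sz]
    rw [Finset.mem_insert]; left
    simp only [Prod.mk.injEq, true_and]; omega

theorem tri_bdry (t : BT) : ∀ (a i : ℕ), a ≤ i → i ≤ a + t.sz → (i, i + 1) ∈ t.tri a := by
  induction t with
  | nil => intro a i h1 h2; simp [tri, sz] at *; omega
  | node l r hl hr =>
    intro a i h1 h2
    simp only [sz] at h2
    simp only [tri, Finset.mem_insert, Finset.mem_union]
    right
    rcases Nat.lt_or_ge i (a + l.sz + 1) with h | h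
    · left; exact hl a i h1 (by omega)
    · right; exact hr _ i h (by omega)

theorem tri_card (t : BT) : ∀ (a : ℕ), (t.tri a).card = 2 * t.sz + 1 := by
  induction t with
  | nil => intro a; simp [tri, sz]
  | node l r hl hr =>
    intro a
    simp only [tri, sz]
    rw [Finset.card_insert_of_notMem, Finset.card_union_of_disjoint, hl, hr]
    · omega
    · rw [Finset.disjoint_left]
      intro e h1 h2
      have := tri_mem _ _ _ h1
      have := tri_mem _ _ _ h2
      omega
    · rw [Finset.mem_union]
      rintro (h | h)
      · have := tri_mem _ _ _ h
        simp only at this; omega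
      · have := tri_mem _ _ _ h
        simp only at this; omega

theorem tri_nc (t : BT) : ∀ (a : ℕ), ∀ e ∈ t.tri a, ∀ f ∈ t.tri a,
    ¬(e.1 < f.1 ∧ f.1 < e.2 ∧ e.2 < f.2) := by
  induction t with
  | nil =>
    intro a e he f hf
    simp only [tri, Finset.mem_singleton] at he hf
    subst he; subst hf; simp
  | node l r hl hr =>
    intro a e he f hf
    have me := tri_mem _ _ _ he
    have mf := tri_mem _ _ _ hf
    simp only [sz] at me mf
    simp only [tri, Finset.mem_insert, Finset.mem_union] at he hf
    rcases he with rfl | he | he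
    · simp only; omega
    · rcases hf with rfl | hf | hf
      · simp only; omega
      · exact hl a e he f hf
      · have := tri_mem _ _ _ he
        have := tri_mem _ _ _ hf
        omega
    · rcases hf with rfl | hf | hf
      · simp only; omega
      · have := tri_mem _ _ _ he
        have := tri_mem _ _ _ hf
        omega
      · exact hr _ e he f hf

theorem isTriangulation_tri (t : BT) : IsTriangulation t.sz (t.tri 0) := by
  refine ⟨?_, ?_, ?_, tri_card t 0, tri_nc t 0⟩
  · intro e he; have := tri_mem _ _ _ he; omega
  · intro i hi; exact tri_bdry t 0 i (by omega) (by omega)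
  · simpa using tri_top t 0

/-- Every noncrossing family is contained in a triangulation coming from a tree. -/
theorem exists_tri (N : ℕ) : ∀ (a : ℕ) (T : Finset (ℕ × ℕ)),
    (∀ e ∈ T, a ≤ e.1 ∧ e.1 < e.2 ∧ e.2 ≤ a + N + 1) →
    (∀ e ∈ T, ∀ f ∈ T, ¬(e.1 < f.1 ∧ f.1 < e.2 ∧ e.2 < f.2)) →
    ∃ t : BT, t.sz = N ∧ T ⊆ t.tri a := by
  induction N using Nat.strong_induction_on with
  | _ N ih =>
    intro a T hT hnc
    rcases Nat.eq_zero_or_pos N with rfl | hN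
    · refine ⟨nil, rfl, ?_⟩
      intro e he
      have := hT e he
      simp only [tri, Finset.mem_singleton]
      ext <;> simp only <;> omega
    · let S := (Finset.Icc (a + 1) (a + N)).filter fun k => k = a + 1 ∨ (a, k) ∈ T
      have hS : S.Nonempty := ⟨a + 1, by simp [S]; omega⟩
      obtain ⟨k, hk, hmax⟩ := S.exists_max_image id hS
      simp only [S, Finset.mem_filter, Finset.mem_Icc, id] at hk hmax
      obtain ⟨⟨k1, k2⟩, k3⟩ := hk
      obtain ⟨l, hl, hl'⟩ := ih (k - a - 1) (by omega) a (T.filter fun e => e.2 ≤ k) (by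
        intro e he
        rw [Finset.mem_filter] at he
        have := hT e he.1
        omega) (fun e he f hf =>
          hnc e (Finset.mem_filter.1 he).1 f (Finset.mem_filter.1 hf).1)
      obtain ⟨r, hr, hr'⟩ := ih (a + N - k) (by omega) k (T.filter fun e => k ≤ e.1) (by
        intro e he
        rw [Finset.mem_filter] at he
        have := hT e he.1
        omega) (fun e he f hf =>
          hnc e (Finset.mem_filter.1 he).1 f (Finset.mem_filter.1 hf).1)
      refine ⟨node l r, by simp only [sz]; omega, ?_⟩
      have hak : a + l.sz + 1 = k := by omega
      intro e he
      simp only [tri, Finset.mem_insert, Finset.mem_union, hak]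
      by_cases c1 : e.2 ≤ k
      · right; left; exact hl' (Finset.mem_filter.2 ⟨he, c1⟩)
      by_cases c2 : k ≤ e.1
      · right; right; exact hr' (Finset.mem_filter.2 ⟨he, c2⟩)
      left
      have he1 := hT e he
      have hea : e.1 = a := by
        rcases k3 with k3 | k3
        · omega
        · have := hnc _ k3 e he
          simp only at this
          omega
      have heb : ¬ e.2 ≤ a + N := by
        intro h
        have := hmax e.2 ⟨by omega, Or.inr (by rw [← hea]; exact he)⟩
        omega
      ext <;> simp only <;> omega

theorem exists_tri_eq {n : ℕ} {T : Finset (ℕ × ℕ)} (h : IsTriangulation n T) :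
    ∃ t : BT, t.sz = n ∧ t.tri 0 = T := by
  obtain ⟨h1, -, -, h4, h5⟩ := h
  obtain ⟨t, ht, hs⟩ := exists_tri n 0 T (by intro e he; have := h1 e he; omega) h5
  refine ⟨t, ht, (Finset.eq_of_subset_of_card_le hs ?_).symm⟩
  rw [tri_card, h4, ht]

theorem lf_node (a : ℕ) (l r : BT) (k : ℕ) : (node l r).lf a k =
    if k < a + l.sz + 1 then lf a l k
    else if k = a + l.sz + 1 then a
    else lf (a + l.sz + 1) r k := rfl

theorem rt_node (a : ℕ) (l r : BT) (k : ℕ) : (node l r).rt a k =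
    if k < a + l.sz + 1 then rt a l k
    else if k = a + l.sz + 1 then a + l.sz + 1 + r.sz + 1
    else rt (a + l.sz + 1) r k := rfl

theorem tri_mid (t : BT) : ∀ (a k : ℕ), a < k → k ≤ a + t.sz →
    t.lf a k < k ∧ k < t.rt a k ∧ (t.lf a k, k) ∈ t.tri a ∧ (k, t.rt a k) ∈ t.tri a ∧
      (t.lf a k, t.rt a k) ∈ t.tri a := by
  induction t with
  | nil => intro a k; simp [sz]; omega
  | node l r hl hr =>
    intro a k h1 h2
    simp only [sz] at h2
    have e := tri_top l a
    have e' := tri_top r (a + l.sz + 1)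
    simp only [tri, Finset.mem_insert, Finset.mem_union, lf_node, rt_node]
    rcases lt_trichotomy k (a + l.sz + 1) with h | h | h
    · simp only [if_pos h]
      have := hl a k h1 (by omega)
      tauto
    · subst h
      simp only [lt_irrefl, if_false, if_true]
      refine ⟨by omega, by omega, ?_, ?_, ?_⟩
      · right; left; exact e
      · right; right; exact e'
      · left; trivial
    · simp only [if_neg (show ¬ k < a + l.sz + 1 by omega),
        if_neg (show ¬ k = a + l.sz + 1 by omega)]
      have := hr (a + l.sz + 1) k h (by omega)
      tauto

theorem lf_root (t : BT) (a : ℕ) (h : 0 < t.sz) : t.lf a (t.root a) = a := by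
  cases t with
  | nil => simp [sz] at h
  | node l r => rw [root_node, lf_node]; simp

theorem rt_root (t : BT) (a : ℕ) (h : 0 < t.sz) : t.rt a (t.root a) = a + t.sz + 1 := by
  cases t with
  | nil => simp [sz] at h
  | node l r => rw [root_node, rt_node]; simp [sz]; omega

theorem tri_phi (t : BT) : ∀ (a k : ℕ), a < k → k ≤ a + t.sz → k ≠ t.root a →
    ((∃ m, a < m ∧ m ≤ a + t.sz ∧ t.lf a k = m ∧ t.rt a k = t.rt a m) ∧ t.par a k = t.lf a k) ∨
    ((∃ m, a < m ∧ m ≤ a + t.sz ∧ t.rt a k = m ∧ t.lf a k = t.lf a m) ∧ t.par a k = t.rt a k) := by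
  induction t with
  | nil => intro a k; simp [sz]; omega
  | node l r hl hr =>
    intro a k h1 h2 h3
    rw [root_node] at h3
    simp only [sz] at h2 ⊢
    have L1 : ∀ m, m ≤ a + l.sz → (node l r).lf a m = l.lf a m := fun m hm => by
      rw [lf_node, if_pos (by omega)]
    have R1 : ∀ m, m ≤ a + l.sz → (node l r).rt a m = l.rt a m := fun m hm => by
      rw [rt_node, if_pos (by omega)]
    have L2 : ∀ m, a + l.sz + 1 < m → (node l r).lf a m = r.lf (a + l.sz + 1) m := fun m hm => by
      rw [lf_node, if_neg (by omega), if_neg (by omega)]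
    have R2 : ∀ m, a + l.sz + 1 < m → (node l r).rt a m = r.rt (a + l.sz + 1) m := fun m hm => by
      rw [rt_node, if_neg (by omega), if_neg (by omega)]
    have L3 : (node l r).lf a (a + l.sz + 1) = a := by simp [lf_node]
    have R3 : (node l r).rt a (a + l.sz + 1) = a + l.sz + 1 + r.sz + 1 := by simp [rt_node]
    rcases Nat.lt_or_gt_of_ne h3 with h | h
    · have hk : k ≤ a + l.sz := by omega
      have h0 : 0 < l.sz := by omega
      by_cases hkr : k = l.root a
      · right
        have hp := par_node_left_root (a := a) (r := r) h0
        rw [← hkr] at hp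
        have e1 := lf_root l a h0
        have e2 := rt_root l a h0
        rw [← hkr] at e1 e2
        rw [L1 k hk, R1 k hk, hp, e1, e2]
        exact ⟨⟨_, by omega, by omega, rfl, L3.symm⟩, rfl⟩
      · rw [L1 k hk, R1 k hk, par_node_left hk hkr]
        rcases hl a k h1 hk hkr with ⟨⟨m, m1, m2, m3, m4⟩, h⟩ | ⟨⟨m, m1, m2, m3, m4⟩, h⟩
        · exact Or.inl ⟨⟨m, m1, by omega, m3, by rw [R1 m m2, m4]⟩, h⟩
        · exact Or.inr ⟨⟨m, m1, by omega, m3, by rw [L1 m m2, m4]⟩, h⟩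
    · have h0 : 0 < r.sz := by omega
      by_cases hkr : k = r.root (a + l.sz + 1)
      · left
        have hp := par_node_right_root (a := a) (l := l) h0
        rw [← hkr] at hp
        have e1 := lf_root r (a + l.sz + 1) h0
        have e2 := rt_root r (a + l.sz + 1) h0
        rw [← hkr] at e1 e2
        rw [L2 k h, R2 k h, hp, e1, e2]
        exact ⟨⟨_, by omega, by omega, rfl, R3.symm⟩, rfl⟩
      · rw [L2 k h, R2 k h, par_node_right h hkr]
        rcases hr _ k h (by omega) hkr with ⟨⟨m, m1, m2, m3, m4⟩, h⟩ | ⟨⟨m, m1, m2, m3, m4⟩, h⟩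
        · exact Or.inl ⟨⟨m, by omega, by omega, m3, by rw [R2 m m1, m4]⟩, h⟩
        · exact Or.inr ⟨⟨m, by omega, by omega, m3, by rw [L2 m m1, m4]⟩, h⟩

theorem triData_tri (t : BT) (h : 0 < t.sz) :
    TriData t.sz (t.tri 0) (t.lf 0) (t.rt 0) (t.root 0) (t.par 0) := by
  refine ⟨?_, ⟨?_, ?_, lf_root t 0 h, ?_⟩, ?_⟩
  · intro k h1 h2; exact tri_mid t 0 k (by omega) (by omega)
  · have := root_mem 0 t h; omega
  · have := root_mem 0 t h; omega
  · have := rt_root t 0 h; omega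
  · intro k h1 h2 h3
    have := tri_phi t 0 k (by omega) (by omega) h3
    simpa [Nat.lt_iff_add_one_le] using this

end BT

theorem mid_unique {T : Finset (ℕ × ℕ)}
    (hnc : ∀ e ∈ T, ∀ f ∈ T, ¬(e.1 < f.1 ∧ f.1 < e.2 ∧ e.2 < f.2))
    {x k y x' y' : ℕ} (h1 : x < k) (h2 : k < y) (h3 : (x, k) ∈ T) (h4 : (k, y) ∈ T)
    (h5 : (x, y) ∈ T) (h1' : x' < k) (h2' : k < y') (h3' : (x', k) ∈ T) (h4' : (k, y') ∈ T)
    (h5' : (x', y') ∈ T) : x = x' ∧ y = y' := by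
  have a1 := hnc _ h5 _ h5'
  have a2 := hnc _ h5' _ h5
  have a3 := hnc _ h3 _ h5'
  have a4 := hnc _ h3' _ h5
  have a5 := hnc _ h5 _ h4'
  have a6 := hnc _ h5' _ h4
  simp only at a1 a2 a3 a4 a5 a6
  omega

theorem data_unique {n : ℕ} {T : Finset (ℕ × ℕ)} (hT : IsTriangulation n T)
    {kL kR kL' kR' φ φ' : ℕ → ℕ} {k0 k0' : ℕ}
    (h : TriData n T kL kR k0 φ) (h' : TriData n T kL' kR' k0' φ') :
    k0 = k0' ∧ ∀ k, 1 ≤ k → k ≤ n → k ≠ k0 → φ k = φ' k := by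
  obtain ⟨-, -, -, -, hnc⟩ := hT
  obtain ⟨hm, ⟨r1, r2, r3, r4⟩, hp⟩ := h
  obtain ⟨hm', ⟨r1', r2', r3', r4'⟩, hp'⟩ := h'
  have hLR : ∀ k, 1 ≤ k → k ≤ n → kL k = kL' k ∧ kR k = kR' k := by
    intro k h1 h2
    obtain ⟨a1, a2, a3, a4, a5⟩ := hm k h1 h2
    obtain ⟨b1, b2, b3, b4, b5⟩ := hm' k h1 h2
    exact mid_unique hnc a1 a2 a3 a4 a5 b1 b2 b3 b4 b5
  have hk : k0 = k0' := by
    obtain ⟨a1, a2, a3, a4, a5⟩ := hm k0 r1 r2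
    obtain ⟨b1, b2, b3, b4, b5⟩ := hm' k0' r1' r2'
    have c1 := hnc _ a3 _ b4
    have c2 := hnc _ b3 _ a4
    simp only at c1 c2
    omega
  subst hk
  refine ⟨rfl, ?_⟩
  intro k h1 h2 h3
  have e := hLR k h1 h2
  have key : ∀ m m', 1 ≤ m → m ≤ n → 1 ≤ m' → m' ≤ n → kL k = m → kR k = kR m →
      kR k = m' → kL k = kL m' → False := by
    intro m m' m1 m2 m1' m2' e1 e2 e3 e4
    obtain ⟨a1, a2, a3, a4, a5⟩ := hm m m1 m2
    obtain ⟨b1, b2, b3, b4, b5⟩ := hm m' m1' m2'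
    have c1 := hnc _ a5 _ b5
    simp only at c1
    omega
  rcases hp k h1 h2 h3 with ⟨⟨m, m1, m2, m3, m4⟩, q⟩ | ⟨⟨m, m1, m2, m3, m4⟩, q⟩ <;>
  rcases hp' k h1 h2 h3 with ⟨⟨m', m1', m2', m3', m4'⟩, q'⟩ | ⟨⟨m', m1', m2', m3', m4'⟩, q'⟩
  · omega
  · have := hLR m' m1' m2'
    exact (key m m' m1 m2 m1' m2' m3 m4 (by omega) (by omega)).elim
  · have := hLR m' m1' m2'
    exact (key m' m m1' m2' m1 m2 (by omega) (by omega) m3 m4).elim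
  · omega

open BT

theorem triEquiv_iff (t t' : BT) (h : 0 < t.sz) (hs : t.sz = t'.sz) :
    TriEquiv t.sz (t.tri 0) (t'.tri 0) ↔ t.canon = t'.canon := by
  have hT := isTriangulation_tri t
  have hT' := isTriangulation_tri t'
  have hd := triData_tri t h
  have hd' := triData_tri t' (hs ▸ h)
  rw [← hs] at hT' hd'
  have hI : Set.Icc 1 t.sz = Set.Ioc 0 (0 + t.sz) := by ext; simp [Nat.lt_iff_add_one_le]
  constructor
  · rintro ⟨kL, kR, kL', kR', k0, k0', φ, φ', f, d, d', hb, hr, hp⟩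
    obtain ⟨u1, u2⟩ := data_unique hT d hd
    obtain ⟨u1', u2'⟩ := data_unique hT' d' hd'
    subst u1
    subst u1'
    have : Iso 0 t 0 t' f := by
      refine ⟨?_, fun _ => hr, ?_⟩
      · rw [← hs, ← hI]; exact hb
      · intro k h1 h2 h3
        have hk : k ∈ Set.Icc 1 t.sz := ⟨h1, by omega⟩
        have hfk := hb.mapsTo hk
        rw [← u2 k hk.1 hk.2 h3, hp k hk.1 hk.2 h3, u2' (f k) hfk.1 hfk.2]
        intro e
        rw [← hr] at e
        refine h3 (hb.injOn hk ?_ e)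
        rw [hI]
        exact root_mem 0 t h
    exact this.canon_eq
  · intro hc
    obtain ⟨f, hb, hr, hp⟩ := exists_iso t t' 0 0 hc
    refine ⟨_, _, _, _, _, _, _, _, f, hd, hd', ?_, hr h, ?_⟩
    · rw [hI]; rw [← hs] at hb; exact hb
    · intro k h1 h2 h3
      exact hp k h1 (by omega) h3

/-- Codes of trees with `N` leaves. -/
def D (N : ℕ) : Set ℕ := {x | ∃ t : BT, t.sz + 1 = N ∧ t.canon = x}

theorem D_disj {N M x : ℕ} (h : x ∈ D N) (h' : x ∈ D M) : N = M := by
  obtain ⟨t, rfl, rfl⟩ := h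
  obtain ⟨t', rfl, e⟩ := h'
  rw [sz_eq_of_canon _ _ e]

theorem D_zero : D 0 = ∅ := by
  ext x; simp [D]

theorem D_one : D 1 = {0} := by
  ext x
  simp only [D, Set.mem_ofPred_eq, Set.mem_singleton_iff]
  constructor
  · rintro ⟨t, h, rfl⟩
    exact canon_nil_of (by omega)
  · rintro rfl
    exact ⟨nil, rfl, rfl⟩

theorem D_eq (N : ℕ) (hN : 2 ≤ N) :
    D N = ⋃ i ∈ Finset.Icc 1 (N / 2), Set.image2 g (D i) (D (N - i)) := by
  ext x
  simp only [Set.mem_iUnion, Set.mem_image2, Finset.mem_Icc, exists_prop]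
  constructor
  · rintro ⟨t, h, rfl⟩
    cases t with
    | nil => simp [sz] at h; omega
    | node l r =>
      simp only [sz] at h
      rcases le_total (l.sz + 1) (r.sz + 1) with c | c
      · exact ⟨l.sz + 1, by omega, l.canon, ⟨l, rfl, rfl⟩, r.canon, ⟨r, by omega, rfl⟩, rfl⟩
      · exact ⟨r.sz + 1, by omega, r.canon, ⟨r, rfl, rfl⟩, l.canon, ⟨l, by omega, rfl⟩,
          g_comm _ _⟩
  · rintro ⟨i, hi, _, ⟨l, hl, rfl⟩, _, ⟨r, hr, rfl⟩, rfl⟩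
    exact ⟨node l r, by simp only [sz]; omega, rfl⟩

theorem D_fin (N : ℕ) : (D N).Finite := by
  induction N using Nat.strong_induction_on with
  | _ N ih =>
    rcases Nat.lt_or_ge N 2 with h | h
    · interval_cases N
      · rw [D_zero]; exact Set.finite_empty
      · rw [D_one]; exact Set.finite_singleton _
    · rw [D_eq N h]
      refine Set.Finite.biUnion (Finset.finite_toSet _) ?_
      intro i hi
      simp only [Finset.coe_Icc, Set.mem_Icc] at hi
      exact Set.Finite.image2 _ (ih i (by omega)) (ih (N - i) (by omega))

/-- Finset version. -/
noncomputable def F (N : ℕ) : Finset ℕ := (D_fin N).toFinset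

theorem mem_F {N x : ℕ} : x ∈ F N ↔ x ∈ D N := by simp [F]

/-- The block of codes whose smaller subtree has `i` leaves. -/
noncomputable def blk (N i : ℕ) : Finset ℕ := Finset.image₂ g (F i) (F (N - i))

theorem F_eq (N : ℕ) (hN : 2 ≤ N) : F N = (Finset.Icc 1 (N / 2)).biUnion (blk N) := by
  ext x
  rw [mem_F, D_eq N hN]
  simp [blk, mem_F]

theorem F_card (N : ℕ) (hN : 2 ≤ N) :
    (F N).card = ∑ i ∈ Finset.Icc 1 (N / 2), (blk N i).card := by
  rw [F_eq N hN, Finset.card_biUnion]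
  intro i hi j hj hij
  rw [Finset.mem_coe, Finset.mem_Icc] at hi hj
  rw [Function.onFun, Finset.disjoint_left]
  intro x hx hy
  simp only [blk, Finset.mem_image₂, mem_F] at hx hy
  obtain ⟨a, ha, b, hb, rfl⟩ := hx
  obtain ⟨c, hc, d, hd, e⟩ := hy
  rcases g_inj e with ⟨rfl, rfl⟩ | ⟨rfl, rfl⟩
  · exact hij (D_disj ha hc)
  · have := D_disj ha hd
    have := D_disj hb hc
    omega

theorem blk_card_lt (N i : ℕ) (h : i < N - i) :
    (blk N i).card = (F i).card * (F (N - i)).card := by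
  rw [blk, Finset.card_image₂_iff.2]
  rintro ⟨a, b⟩ hab ⟨c, d⟩ hcd e
  simp only [Set.mem_prod, Finset.mem_coe, mem_F] at hab hcd
  rcases g_inj e with ⟨e1, e2⟩ | ⟨e1, e2⟩ <;> simp only at e1 e2
  · rw [e1, e2]
  · have := D_disj hab.1 (e1 ▸ hcd.2)
    omega

theorem blk_card_eq (m : ℕ) :
    (blk (2 * m) m).card = (F m).card * ((F m).card + 1) / 2 := by
  have : blk (2 * m) m = (F m).sym2.image (Sym2.lift ⟨g, g_comm⟩) := by
    ext x
    rw [blk, show 2 * m - m = m by omega]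
    simp only [Finset.mem_image₂, Finset.mem_image]
    constructor
    · rintro ⟨a, ha, b, hb, rfl⟩
      exact ⟨s(a, b), Finset.mk_mem_sym2_iff.2 ⟨ha, hb⟩, rfl⟩
    · rintro ⟨z, hz, rfl⟩
      induction z using Sym2.ind with
      | _ a b =>
        rw [Finset.mk_mem_sym2_iff] at hz
        exact ⟨a, hz.1, b, hz.2, rfl⟩
  rw [this, Finset.card_image_of_injective, Finset.card_sym2, Nat.choose_two_right,
    Nat.add_sub_cancel, mul_comm]
  intro z w
  induction z using Sym2.ind with
  | _ a b =>
    induction w using Sym2.ind with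
    | _ c d =>
      intro e
      simp only [Sym2.lift_mk] at e
      rw [Sym2.eq_iff]
      exact g_inj e

theorem F_card_eq (b : ℕ → ℕ)
    (hb1 : b 1 = 1)
    (hodd : ∀ m, 2 ≤ m →
      b (2 * m - 1) = ∑ i ∈ Finset.Icc 1 (m - 1), b i * b (2 * m - i - 1))
    (heven : ∀ m, 1 ≤ m →
      b (2 * m) = b m * (b m + 1) / 2 + ∑ i ∈ Finset.Icc 1 (m - 1), b i * b (2 * m - i))
    (N : ℕ) (hN : 1 ≤ N) : (F N).card = b N := by
  induction N using Nat.strong_induction_on with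
  | _ N ih =>
    rcases Nat.lt_or_ge N 2 with h | h
    · have : N = 1 := by omega
      subst this
      have : F 1 = {0} := by ext x; rw [mem_F, D_one]; simp
      rw [this, hb1]; rfl
    · rw [F_card N h]
      rcases Nat.even_or_odd' N with ⟨m, rfl | rfl⟩
      · rw [heven m (by omega), show 2 * m / 2 = m by omega]
        obtain ⟨m, rfl⟩ : ∃ q, m = q + 1 := ⟨m - 1, by omega⟩
        rw [Finset.sum_Icc_succ_top (by omega), blk_card_eq, ih (m + 1) (by omega) (by omega),
          add_comm, Nat.add_sub_cancel]
        congr 1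
        refine Finset.sum_congr rfl fun i hi => ?_
        rw [Finset.mem_Icc] at hi
        rw [blk_card_lt _ _ (by omega), ih i (by omega) (by omega), ih _ (by omega) (by omega)]
      · have e := hodd (m + 1) (by omega)
        rw [show 2 * (m + 1) - 1 = 2 * m + 1 by omega, Nat.add_sub_cancel] at e
        rw [e, show (2 * m + 1) / 2 = m by omega]
        refine Finset.sum_congr rfl fun i hi => ?_
        rw [Finset.mem_Icc] at hi
        rw [blk_card_lt _ _ (by omega), ih i (by omega) (by omega), ih _ (by omega) (by omega),
          show 2 * (m + 1) - i - 1 = 2 * m + 1 - i by omega]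

theorem main (n : ℕ) (hn : 1 ≤ n) :
    Nat.card
      (Quot fun (T T' : {T : Finset (ℕ × ℕ) // IsTriangulation n T}) =>
        TriEquiv n T.1 T'.1) = (F (n + 1)).card := by
  choose tr htr using fun T : {T : Finset (ℕ × ℕ) // IsTriangulation n T} => exists_tri_eq T.2
  have key : ∀ T T' : {T : Finset (ℕ × ℕ) // IsTriangulation n T},
      TriEquiv n T.1 T'.1 ↔ (tr T).canon = (tr T').canon := by
    intro T T'
    have := triEquiv_iff (tr T) (tr T') (by rw [(htr T).1]; omega) (by rw [(htr T).1, (htr T').1])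
    rwa [(htr T).1, (htr T).2, (htr T').2] at this
  have hmem : ∀ T, (tr T).canon ∈ F (n + 1) := fun T =>
    mem_F.2 ⟨tr T, by rw [(htr T).1], rfl⟩
  rw [← Nat.card_eq_finsetCard]
  refine Nat.card_eq_of_bijective
    (Quot.lift (fun T => (⟨(tr T).canon, hmem T⟩ : {x // x ∈ F (n + 1)}))
      fun T T' h => Subtype.ext ((key T T').1 h)) ⟨?_, ?_⟩
  · rintro ⟨T⟩ ⟨T'⟩ h
    exact Quot.sound ((key T T').2 (congrArg Subtype.val h))
  · rintro ⟨x, hx⟩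
    obtain ⟨t, ht, rfl⟩ := mem_F.1 hx
    have ht' : t.sz = n := by omega
    let T : {T : Finset (ℕ × ℕ) // IsTriangulation n T} :=
      ⟨t.tri 0, ht' ▸ isTriangulation_tri t⟩
    refine ⟨Quot.mk _ T, Subtype.ext ?_⟩
    change (tr T).canon = t.canon
    have h1 := triEquiv_iff (tr T) t (by rw [(htr T).1]; omega) (by rw [(htr T).1, ht'])
    have h2 := (triEquiv_iff t t (by omega) rfl).2 rfl
    rw [(htr T).1, (htr T).2] at h1
    rw [ht'] at h2
    exact h1.1 h2

end WE

/-- The number of equivalence classes of triangulations of the `(n+2)`-gon, two being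
equivalent iff their binary trees are isomorphic as unordered rooted trees, equals the
Wedderburn–Etherington number `b_{n+1}`, where `b₁ = 1`,
`b_{2m−1} = ∑_{i=1}^{m−1} bᵢ b_{2m−i−1}` (`m ≥ 2`) and
`b_{2m} = b_m(b_m+1)/2 + ∑_{i=1}^{m−1} bᵢ b_{2m−i}` (`m ≥ 1`). -/
theorem stmt10 (n : ℕ) (hn : 1 ≤ n) (b : ℕ → ℕ)
    (hb1 : b 1 = 1)
    (hodd : ∀ m, 2 ≤ m →
      b (2 * m - 1) = ∑ i ∈ Finset.Icc 1 (m - 1), b i * b (2 * m - i - 1))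
    (heven : ∀ m, 1 ≤ m →
      b (2 * m) = b m * (b m + 1) / 2 + ∑ i ∈ Finset.Icc 1 (m - 1), b i * b (2 * m - i)) :
    Nat.card
      (Quot fun (T T' : {T : Finset (ℕ × ℕ) // IsTriangulation n T}) =>
        TriEquiv n T.1 T'.1) = b (n + 1) := by
  rw [WE.main n hn]
  exact WE.F_card_eq b hb1 hodd heven (n + 1) (by omega)
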